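/- arXiv:math/0204052 — 2 statements merged into one kernel-verified Lean document; each statement's English description precedes it below -/
import Mathlib

section
/- (Khovanskii's theorem) Let S be a commutative monoid and A a finite nonempty subset of S. Then there exists a polynomial p(t) with rational coefficients and an integer h_0 such that the cardinality of the h-fold sumset hA equals p(h) for all h ≥ h_0. -/
/-!
Send an exponent vector `x : A →₀ ℕ` to the sum of the elements of `A` with multiplicities `x`, so
that `h • A` is the image of the vectors of degree `h`. In each fibre of the map
`x ↦ (degree of x, sum of x)` keep only the least vector for some monomial order. Because the order
is compatible with addition, the vectors kept form a lower set, which by Dickson's lemma is cut out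
by finitely many conditions `¬m ≤ x`. By inclusion–exclusion, the size of `h • A` is therefore a
fixed integer combination of numbers of the form `#{x | x.degree = h ∧ m ≤ x}`, and each of these
equals `(h - m.degree + d).choose d` with `d + 1 = #A` as soon as `m.degree ≤ h`.
-/

open Filter Finset Polynomial
open scoped MonomialOrder Pointwise

theorem exists_finset_mem_iff_forall_not_le_of_isLowerSet {α : Type*} [PartialOrder α]
    [WellQuasiOrderedLE α] {D : Set α} (hD : IsLowerSet D) :
    ∃ F : Finset α, ∀ x, x ∈ D ↔ ∀ m ∈ F, ¬m ≤ x := by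
  have finite_minimal : {m | Minimal (· ∉ D) m}.Finite :=
    WellQuasiOrderedLE.finite_of_isAntichain (setOfPred_minimal_antichain _)
  refine ⟨finite_minimal.toFinset, fun x => ⟨fun hx m hm hmx => ?_, fun hx => ?_⟩⟩
  · have hm : Minimal (· ∉ D) m := finite_minimal.mem_toFinset.1 hm
    exact hm.prop (hD hmx hx)
  · by_contra hxD
    obtain ⟨m, hmx, hm⟩ := exists_minimal_le_of_wellFoundedLT (· ∉ D) x hxD
    exact hx m (finite_minimal.mem_toFinset.2 hm) hmx

theorem card_filter_forall_not_le {α : Type*} [SemilatticeSup α] [OrderBot α] [DecidableLE α]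
    (s F : Finset α) :
    (#{x ∈ s | ∀ m ∈ F, ¬m ≤ x} : ℤ) =
      ∑ T ∈ F.powerset, (-1) ^ #T * (#{x ∈ s | T.sup id ≤ x} : ℤ) := by
  classical
  have indicator_expansion (x : α) : (if ∀ m ∈ F, ¬m ≤ x then (1 : ℤ) else 0) =
      ∑ T ∈ F.powerset, (-1) ^ #T * if T.sup id ≤ x then 1 else 0 := by
    calc (if ∀ m ∈ F, ¬m ≤ x then (1 : ℤ) else 0)
        = ∏ m ∈ F, if ¬m ≤ x then 1 else 0 := by rw [prod_ite_zero, prod_const_one]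
      _ = ∏ m ∈ F, (1 - if m ≤ x then 1 else 0) :=
          prod_congr rfl fun m _ => by split_ifs <;> rfl
      _ = ∑ T ∈ F.powerset, (-1) ^ #T * if T.sup id ≤ x then 1 else 0 := by
          simp [prod_sub, prod_ite_zero]
  simp only [card_filter, Nat.cast_sum, Nat.cast_ite, Nat.cast_one, Nat.cast_zero,
    indicator_expansion, mul_sum]
  exact sum_comm

section finsuppAntidiag

variable {σ : Type*} [DecidableEq σ] {s : Finset σ} {n : ℕ}

theorem mem_finsuppAntidiag_iff_degree {x : σ →₀ ℕ} :
    x ∈ s.finsuppAntidiag n ↔ x.degree = n ∧ x.support ⊆ s :=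
  mem_finsuppAntidiag'

theorem filter_le_finsuppAntidiag_degree_add {m : σ →₀ ℕ} (hm : m.support ⊆ s) :
    {x ∈ s.finsuppAntidiag (m.degree + n) | m ≤ x} =
      (s.finsuppAntidiag n).map (addLeftEmbedding m) := by
  ext x
  simp only [mem_filter, Finset.mem_map, mem_finsuppAntidiag_iff_degree, addLeftEmbedding_apply]
  constructor
  · rintro ⟨⟨hx, hxs⟩, hmx⟩
    obtain ⟨y, rfl⟩ := exists_add_of_le hmx
    rw [map_add, Nat.add_left_cancel_iff] at hx
    exact ⟨y, ⟨hx, (Finsupp.support_mono le_add_self).trans hxs⟩, rfl⟩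
  · rintro ⟨y, ⟨rfl, hys⟩, rfl⟩
    exact ⟨⟨map_add .., Finsupp.support_add.trans (union_subset hm hys)⟩, le_self_add⟩

theorem card_filter_le_finsuppAntidiag_eq_eval_preHilbertPoly (K : Type*) [Field K] [CharZero K]
    (hs : s.Nonempty) {m : σ →₀ ℕ} (hm : m.support ⊆ s) (hn : m.degree ≤ n) :
    (#{x ∈ s.finsuppAntidiag n | m ≤ x} : K) =
      (preHilbertPoly K (#s - 1) m.degree).eval (n : K) := by
  obtain ⟨k, rfl⟩ := Nat.exists_eq_add_of_le hn
  obtain ⟨d, hd⟩ := Nat.exists_eq_add_of_le' hs.card_pos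
  rw [filter_le_finsuppAntidiag_degree_add hm, card_map, card_finsuppAntidiag_nat_eq_choose,
    preHilbertPoly_eq_choose_sub_add _ _ hn, Nat.add_sub_cancel_left, hd, Nat.add_sub_cancel,
    Nat.add_right_comm, Nat.add_sub_cancel, ← Nat.choose_symm_add, add_comm k]

theorem exists_polynomial_card_filter_mem_of_isLowerSet [Fintype σ] [Nonempty σ]
    {D : Set (σ →₀ ℕ)} [DecidablePred (· ∈ D)] (hD : IsLowerSet D) :
    ∃ p : ℚ[X], ∀ᶠ h : ℕ in atTop,
      (#{x ∈ (univ : Finset σ).finsuppAntidiag h | x ∈ D} : ℚ) = p.eval (h : ℚ) := by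
  obtain ⟨F, hF⟩ := exists_finset_mem_iff_forall_not_le_of_isLowerSet hD
  let q (T : Finset (σ →₀ ℕ)) : ℚ[X] := preHilbertPoly ℚ (#(univ : Finset σ) - 1) (T.sup id).degree
  refine ⟨∑ T ∈ F.powerset, (-1) ^ #T * q T, ?_⟩
  have eventually_degree_le : ∀ᶠ h in atTop, ∀ T ∈ F.powerset, (T.sup id).degree ≤ h :=
    (eventually_all_finset _).2 fun T _ => eventually_ge_atTop _
  filter_upwards [eventually_degree_le] with h degree_le
  have inclusion_exclusion :=
    congrArg (Int.cast : ℤ → ℚ) (card_filter_forall_not_le (univ.finsuppAntidiag h) F)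
  push_cast at inclusion_exclusion
  simp only [hF, inclusion_exclusion, eval_finsetSum]
  refine sum_congr rfl fun T hT => ?_
  rw [card_filter_le_finsuppAntidiag_eq_eval_preHilbertPoly ℚ univ_nonempty (subset_univ _)
    (degree_le T hT)]
  simp [q]

theorem nsmul_image_eq_image_finsuppAntidiag {S : Type*} [AddCommMonoid S] [DecidableEq S]
    (s : Finset σ) (f : σ → S) (h : ℕ) :
    h • s.image f = (s.finsuppAntidiag h).image (Finsupp.linearCombination ℕ f) := by
  have image_single : s.image f =
      (s.image (Finsupp.single · 1)).image (Finsupp.linearCombination ℕ f) := by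
    simp [image_image, Function.comp_def]
  have nsmul_single : h • s.image (Finsupp.single · 1) = s.finsuppAntidiag h := by
    rw [← coe_inj, coe_nsmul, coe_image, Finsupp.nsmul_single_one_image]
    exact Set.ext fun x => mem_finsuppAntidiag_iff_degree.symm
  rw [image_single, ← image_nsmul, nsmul_single]

end finsuppAntidiag

/-- The exponents that are least, for the monomial order `m`, in their fibre of `φ`: the standard
monomials of the congruence `φ x = φ y`. -/
def fiberMinima {σ M : Type*} (m : MonomialOrder σ) (φ : (σ →₀ ℕ) → M) : Set (σ →₀ ℕ) :=
  {x | ∀ y, φ y = φ x → x ≼[m] y}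

section fiberMinima

variable {σ M : Type*} (m : MonomialOrder σ)

theorem isLowerSet_fiberMinima [AddZeroClass M] (φ : (σ →₀ ℕ) →+ M) :
    IsLowerSet (fiberMinima m φ) := by
  intro x w hwx hx y hy
  obtain ⟨z, rfl⟩ := exists_add_of_le hwx
  have shifted_le : w + z ≼[m] y + z := hx (y + z) (by rw [map_add, map_add, hy])
  simpa only [map_add, add_le_add_iff_right] using shifted_le

theorem injOn_fiberMinima (φ : (σ →₀ ℕ) → M) : Set.InjOn φ (fiberMinima m φ) :=
  fun _ hx _ hy hxy => m.toSyn.injective (le_antisymm (hx _ hxy.symm) (hy _ hxy))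

theorem exists_mem_fiberMinima_eq (φ : (σ →₀ ℕ) → M) (x : σ →₀ ℕ) :
    ∃ y ∈ fiberMinima m φ, φ y = φ x := by
  obtain ⟨y, hy, hmin⟩ := WellFounded.has_min (InvImage.wf m.toSyn wellFounded_lt)
    {y | φ y = φ x} ⟨x, rfl⟩
  exact ⟨y, fun z hz => not_lt.1 (hmin z (hz.trans hy)), hy⟩

theorem card_image_eq_card_filter_fiberMinima [DecidableEq M] (φ : (σ →₀ ℕ) → M)
    [DecidablePred (· ∈ fiberMinima m φ)] {s : Finset (σ →₀ ℕ)}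
    (hs : ∀ x ∈ s, ∀ y, φ y = φ x → y ∈ s) :
    #(s.image φ) = #{x ∈ s | x ∈ fiberMinima m φ} := by
  have image_filter : {x ∈ s | x ∈ fiberMinima m φ}.image φ = s.image φ := by
    refine (image_subset_image (filter_subset _ _)).antisymm fun b hb => ?_
    obtain ⟨x, hx, rfl⟩ := mem_image.1 hb
    obtain ⟨y, hy, hyx⟩ := exists_mem_fiberMinima_eq m φ x
    exact mem_image.2 ⟨y, mem_filter.2 ⟨hs x hx y hyx, hy⟩, hyx⟩
  rw [← image_filter, card_image_of_injOn]
  exact (injOn_fiberMinima m φ).mono fun x hx => (mem_filter.1 hx).2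

end fiberMinima

theorem nonempty_monomialOrder.{u} (σ : Type u) : Nonempty (MonomialOrder.{u, u} σ) := by
  obtain ⟨_, _⟩ := exists_wellFoundedGT σ
  exact ⟨MonomialOrder.lex⟩

theorem exists_polynomial_card_image_finsuppAntidiag {σ M : Type*} [DecidableEq σ] [Fintype σ]
    [Nonempty σ] [AddZeroClass M] [DecidableEq M] (φ : (σ →₀ ℕ) →+ M) :
    ∃ p : ℚ[X], ∀ᶠ h : ℕ in atTop,
      (#((univ.finsuppAntidiag h).image φ) : ℚ) = p.eval (h : ℚ) := by
  classical
  obtain ⟨m⟩ := nonempty_monomialOrder σ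
  let ψ : (σ →₀ ℕ) →+ ℕ × M := Finsupp.degree.prod φ
  obtain ⟨p, hp⟩ := exists_polynomial_card_filter_mem_of_isLowerSet (isLowerSet_fiberMinima m ψ)
  refine ⟨p, hp.mono fun h hh => ?_⟩
  have fiber_subset (x) (hx : x ∈ univ.finsuppAntidiag h) (y) (hyx : ψ y = ψ x) :
      y ∈ univ.finsuppAntidiag h := by
    rw [mem_finsuppAntidiag_iff_degree] at hx ⊢
    exact ⟨(congrArg Prod.fst hyx).trans hx.1, subset_univ _⟩
  have image_eq_product : (univ.finsuppAntidiag h).image ψ =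
      {h} ×ˢ (univ.finsuppAntidiag h).image φ := by
    rw [singleton_product, map_eq_image, image_image]
    exact image_congr fun x hx => Prod.ext (mem_finsuppAntidiag_iff_degree.1 hx).1 rfl
  rw [← hh, ← card_image_eq_card_filter_fiberMinima m ψ fiber_subset, image_eq_product,
    card_product, card_singleton, one_mul]

theorem stmt_8 {S : Type*} [AddCommMonoid S] [DecidableEq S]
    (A : Finset S) (hA : A.Nonempty) :
    ∃ p : Polynomial ℚ, ∃ h₀ : ℕ, ∀ h ≥ h₀,
      ((h • A).card : ℚ) = p.eval (h : ℚ) := by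
  have : Nonempty A := hA.to_subtype
  obtain ⟨p, hp⟩ := exists_polynomial_card_image_finsuppAntidiag
    (Finsupp.linearCombination ℕ ((↑) : A → S)).toAddMonoidHom
  refine ⟨p, eventually_atTop.1 <| hp.mono fun h hh => ?_⟩
  have image_val : univ.image ((↑) : A → S) = A := attach_image_val
  rw [← image_val, nsmul_image_eq_image_finsuppAntidiag]
  exact hh
end

section
/- Let S be a commutative monoid and A a finite nonempty subset of S with |A| = k. Then there exists a polynomial p(t) of degree at most k - 1 such that |hA| = p(h) for all sufficiently large h. -/
open Pointwise

/-!
Write `A` as the range of `a : σ → S` and map an exponent vector `x : σ →₀ ℕ` to `∑ i, x i • a i`.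
Then `h • A` is the image of the vectors of degree `h`, and each of its elements has a unique
representative of degree `h` that is least for a fixed monomial order. The vectors which are *not*
least form an upper set, because replacing a vector by a smaller equivalent one persists after
adding any vector to both. By Dickson's lemma this upper set is a finite union of translated
orthants, so inclusion-exclusion reduces the count to binomial coefficients.
-/

open Polynomial Set

/-- The sequence `f` agrees from some point on with a rational polynomial of degree at most `d`.
The degree is `natDegree`, so the zero polynomial is allowed for every `d`. -/
def EventuallyPolynomial (d : ℕ) (f : ℕ → ℕ) : Prop :=
  ∃ p : ℚ[X], p.natDegree ≤ d ∧ ∃ h₀ : ℕ, ∀ h ≥ h₀, (f h : ℚ) = p.eval (h : ℚ)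

lemma EventuallyPolynomial.of_add_eq {d : ℕ} {f g k : ℕ → ℕ} (hk : EventuallyPolynomial d k)
    (hg : EventuallyPolynomial d g) (hadd : ∀ h, f h + g h = k h) : EventuallyPolynomial d f := by
  obtain ⟨p, hp, h₁, hpk⟩ := hk
  obtain ⟨q, hq, h₂, hqg⟩ := hg
  refine ⟨p - q, (natDegree_sub_le p q).trans (max_le hp hq), max h₁ h₂, fun h hh ↦ ?_⟩
  rw [eval_sub, ← hpk h (le_of_max_le_left hh), ← hqg h (le_of_max_le_right hh), ← hadd h]
  push_cast
  ring

lemma exists_finite_upperClosure_eq {α : Type*} [PartialOrder α] [WellQuasiOrderedLE α]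
    {U : Set α} (hU : IsUpperSet U) : ∃ M : Set α, M.Finite ∧ (upperClosure M : Set α) = U := by
  refine ⟨{x | Minimal (· ∈ U) x},
    WellQuasiOrderedLE.finite_of_isAntichain (setOfPred_minimal_antichain _),
    (upperClosure_min (setOfPred_minimal_subset U) hU).antisymm fun x hx ↦ ?_⟩
  obtain ⟨m, hmx, hm⟩ := exists_minimal_le_of_wellFoundedLT (· ∈ U) x hx
  exact mem_upperClosure.2 ⟨m, hm, hmx⟩

section HilbertFunction

variable {σ : Type*}

/-- The number of exponent vectors of degree `h` in `s`. When `s` is the complement of the exponent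
set of a monomial ideal `I`, this is the Hilbert function of the quotient by `I`.
For infinite `σ` there may be infinitely many such vectors, and `ncard` then counts `0`. -/
noncomputable def hilbertFunction (s : Set (σ →₀ ℕ)) (h : ℕ) : ℕ :=
  {x ∈ s | x.degree = h}.ncard

lemma hilbertFunction_univ [Fintype σ] (h : ℕ) :
    hilbertFunction (univ : Set (σ →₀ ℕ)) h = (Fintype.card σ).multichoose h := by
  classical
  rw [← Finset.card_univ, ← Finset.card_finsuppAntidiag_nat_eq_multichoose, ← ncard_coe_finset,
    hilbertFunction]
  congr 1
  ext x
  simp [Finsupp.degree_eq_sum]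

lemma hilbertFunction_image_add (m : σ →₀ ℕ) (s : Set (σ →₀ ℕ)) (h : ℕ) :
    hilbertFunction ((m + ·) '' s) (m.degree + h) = hilbertFunction s h := by
  rw [hilbertFunction, hilbertFunction,
    ← ncard_image_of_injective {x ∈ s | x.degree = h} (add_right_injective m)]
  congr 1
  ext x
  simp only [mem_ofPred_eq, mem_image]
  constructor
  · rintro ⟨⟨y, hy, rfl⟩, hdeg⟩
    exact ⟨y, ⟨hy, by simpa using hdeg⟩, rfl⟩
  · rintro ⟨y, ⟨hy, rfl⟩, rfl⟩
    exact ⟨⟨y, hy, rfl⟩, map_add ..⟩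

lemma hilbertFunction_Ici [Fintype σ] (m : σ →₀ ℕ) (h : ℕ) :
    hilbertFunction (Ici m) (m.degree + h) = (Fintype.card σ).multichoose h := by
  have hIci : Ici m = (m + ·) '' univ := by
    ext x
    simp [le_iff_exists_add, eq_comm]
  rw [hIci, hilbertFunction_image_add, hilbertFunction_univ]

lemma hilbertFunction_sdiff_add [Finite σ] {s t : Set (σ →₀ ℕ)} (hts : t ⊆ s) (h : ℕ) :
    hilbertFunction (s \ t) h + hilbertFunction t h = hilbertFunction s h := by
  have hfin : {x ∈ s | x.degree = h}.Finite :=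
    (Finsupp.finite_of_degree_eq h).subset fun _ hx ↦ hx.2
  have hsdiff : {x ∈ s \ t | x.degree = h} = {x ∈ s | x.degree = h} \ {x ∈ t | x.degree = h} := by
    ext x
    simp only [mem_ofPred_eq, mem_sdiff]
    tauto
  rw [hilbertFunction, hsdiff]
  exact ncard_sdiff_add_ncard_of_subset (fun _ hx ↦ ⟨hts hx.1, hx.2⟩) hfin

variable [Fintype σ] [Nonempty σ]

lemma eventuallyPolynomial_hilbertFunction_Ici (m : σ →₀ ℕ) :
    EventuallyPolynomial (Fintype.card σ - 1) (hilbertFunction (Ici m)) := by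
  refine ⟨preHilbertPoly ℚ (Fintype.card σ - 1) m.degree, (natDegree_preHilbertPoly ..).le,
    m.degree, fun h hh ↦ ?_⟩
  obtain ⟨n, rfl⟩ := exists_add_of_le hh
  obtain ⟨c, hc⟩ := Nat.exists_eq_succ_of_ne_zero (Fintype.card_ne_zero (α := σ))
  rw [preHilbertPoly_eq_choose_sub_add _ _ hh, hilbertFunction_Ici, Nat.multichoose_eq, hc,
    add_tsub_cancel_left, Nat.succ_add_sub_one, Nat.succ_sub_one, add_comm c, Nat.choose_symm_add]

/-- The corner `m` has to vary in the induction on `M`, as removing `Ici a` from `Ici m` removes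
`Ici (m ⊔ a)`. -/
lemma eventuallyPolynomial_hilbertFunction_Ici_sdiff_upperClosure {M : Set (σ →₀ ℕ)} (hM : M.Finite)
    (m : σ →₀ ℕ) :
    EventuallyPolynomial (Fintype.card σ - 1) (hilbertFunction (Ici m \ upperClosure M)) := by
  induction M, hM using Set.Finite.induction_on generalizing m with
  | empty => simpa using eventuallyPolynomial_hilbertFunction_Ici m
  | @insert a M _ _ ih =>
    have hinsert : Ici m \ (upperClosure (insert a M) : Set (σ →₀ ℕ)) =
        (Ici m \ upperClosure M) \ (Ici (m ⊔ a) \ upperClosure M) := by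
      ext x
      simp only [mem_sdiff, mem_Ici, SetLike.mem_coe, mem_upperClosure, exists_mem_insert,
        sup_le_iff]
      grind
    rw [hinsert]
    exact (ih m).of_add_eq (ih (m ⊔ a)) <| hilbertFunction_sdiff_add <|
      sdiff_subset_sdiff_left <| Ici_subset_Ici.2 le_sup_left

lemma eventuallyPolynomial_hilbertFunction_compl {U : Set (σ →₀ ℕ)} (hU : IsUpperSet U) :
    EventuallyPolynomial (Fintype.card σ - 1) (hilbertFunction Uᶜ) := by
  obtain ⟨M, hM, rfl⟩ := exists_finite_upperClosure_eq hU
  have hIci : Ici (0 : σ →₀ ℕ) = univ := Ici_bot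
  simpa only [hIci, compl_eq_univ_sdiff] using
    eventuallyPolynomial_hilbertFunction_Ici_sdiff_upperClosure hM 0

end HilbertFunction

section LeadingExponents

variable {σ T : Type*} (m : MonomialOrder σ)

/-- The exponent vectors that are not least, for the monomial order `m`, in their fibre of `f`.
For an additive `f` these are the leading exponents of the binomials `X ^ x - X ^ y` with
`f x = f y`. -/
def leadingExponents (f : (σ →₀ ℕ) → T) : Set (σ →₀ ℕ) :=
  {x | ∃ y, f y = f x ∧ m.toSyn y < m.toSyn x}

lemma isUpperSet_leadingExponents [AddZeroClass T] (f : (σ →₀ ℕ) →+ T) :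
    IsUpperSet (leadingExponents m f) := by
  rintro x z hxz ⟨y, hfy, hlt⟩
  obtain ⟨w, rfl⟩ := exists_add_of_le hxz
  refine ⟨y + w, by rw [map_add, map_add, hfy], ?_⟩
  rw [map_add, map_add]
  exact add_lt_add_left hlt _

lemma injOn_compl_leadingExponents (f : (σ →₀ ℕ) → T) : InjOn f (leadingExponents m f)ᶜ := by
  intro x hx y hy hxy
  refine m.toSyn.injective (le_antisymm ?_ ?_)
  · exact not_lt.1 fun hlt ↦ hx ⟨y, hxy.symm, hlt⟩
  · exact not_lt.1 fun hlt ↦ hy ⟨x, hxy, hlt⟩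

lemma exists_notMem_leadingExponents (f : (σ →₀ ℕ) → T) (x : σ →₀ ℕ) :
    ∃ y ∉ leadingExponents m f, f y = f x := by
  obtain ⟨y, hy⟩ := exists_minimalFor_of_wellFoundedLT (f · = f x) m.toSyn ⟨x, rfl⟩
  exact ⟨y, fun ⟨z, hz, hlt⟩ ↦ hy.not_lt (hz.trans hy.prop) hlt, hy.prop⟩

lemma ncard_image_degree_eq (f : (σ →₀ ℕ) → T) (h : ℕ) :
    (f '' {x | x.degree = h}).ncard =
      hilbertFunction (leadingExponents m fun x ↦ (x.degree, f x))ᶜ h := by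
  set L := leadingExponents m fun x ↦ (x.degree, f x)
  have himage : f '' {x | x.degree = h} = f '' {x ∈ Lᶜ | x.degree = h} := by
    refine (image_subset_iff.2 fun x hx ↦ ?_).antisymm (image_mono fun x hx ↦ hx.2)
    obtain ⟨y, hyL, hyx⟩ := exists_notMem_leadingExponents m (fun x ↦ (x.degree, f x)) x
    obtain ⟨hdeg, hf⟩ := Prod.ext_iff.1 hyx
    exact ⟨y, ⟨hyL, hdeg.trans hx⟩, hf⟩
  rw [himage, hilbertFunction]
  refine InjOn.ncard_image fun x hx y hy hxy ↦ ?_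
  exact injOn_compl_leadingExponents m _ hx.1 hy.1 (Prod.ext (hx.2.trans hy.2.symm) hxy)

end LeadingExponents

lemma nsmul_range_eq_image_linearCombination {σ S : Type*} [AddCommMonoid S] (a : σ → S) (h : ℕ) :
    h • range a = Finsupp.linearCombination ℕ a '' {x | x.degree = h} := by
  have hrange : range a = Finsupp.linearCombination ℕ a '' ((Finsupp.single · 1) '' univ) := by
    ext s
    simp
  rw [hrange, ← image_nsmul, Finsupp.nsmul_single_one_image]
  simp

theorem eventuallyPolynomial_ncard_nsmul_range {σ S : Type*} [Fintype σ] [Nonempty σ]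
    [AddCommMonoid S] (m : MonomialOrder σ) (a : σ → S) :
    EventuallyPolynomial (Fintype.card σ - 1) fun h ↦ (h • range a).ncard := by
  let f := (Finsupp.linearCombination ℕ a).toAddMonoidHom
  have hcard : (fun h ↦ (h • range a).ncard) =
      hilbertFunction (leadingExponents m (Finsupp.degree.prod f))ᶜ := by
    funext h
    rw [nsmul_range_eq_image_linearCombination]
    exact ncard_image_degree_eq m f h
  rw [hcard]
  exact eventuallyPolynomial_hilbertFunction_compl (isUpperSet_leadingExponents m _)

theorem stmt_9 {S : Type*} [AddCommMonoid S] [DecidableEq S]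
    (A : Finset S) (hA : A.Nonempty) (k : ℕ) (hk : A.card = k) :
    ∃ p : Polynomial ℚ, p.natDegree ≤ k - 1 ∧ ∃ h₀ : ℕ, ∀ h ≥ h₀,
      ((h • A).card : ℚ) = p.eval (h : ℚ) := by
  have : NeZero k := ⟨by rw [← hk]; exact hA.card_ne_zero⟩
  let e : Fin k ≃ A := (A.equivFinOfCardEq hk).symm
  have hrange : range (fun i ↦ (e i : S)) = A := by
    rw [← Function.comp_def, e.surjective.range_comp, Subtype.range_coe]
  have hpoly := eventuallyPolynomial_ncard_nsmul_range .lex (fun i ↦ (e i : S))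
  simpa only [EventuallyPolynomial, hrange, ← Finset.coe_nsmul, ncard_coe_finset,
    Fintype.card_fin] using hpoly
end
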